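/- arXiv:2003.12702 — 6 statements merged into one kernel-verified Lean document; each statement's English description precedes it below -/
import Mathlib

section
/- Let X be a proper metric space and let G be a group acting on X by isometries such that for every compact set K ⊆ X the set {g ∈ G : (g • K) ∩ K ≠ ∅} is finite. Let Y ⊆ X be a nonempty closed subset and let H ≤ G be a subgroup with h • Y = Y for every h ∈ H, and suppose there is a compact set D ⊆ Y with H • D = Y. Then for every R > 0 there exists a finite subset F ⊆ G such that every g ∈ G for which there exist points y, z ∈ Y with dist(y, g • z) ≤ R lies in the set H F H = {h₁ f h₂ : h₁, h₂ ∈ H, f ∈ F}. In particular, the set of double cosets {H g H : g ∈ G and dist(y, g • z) ≤ R for some y, z ∈ Y} is finite. -/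
/-! If `y = h₁ • d₁` and `z = h₂ • d₂` with `d₁, d₂ ∈ D`, then `f = h₁⁻¹ * g * h₂` satisfies
`dist d₁ (f • d₂) = dist y (g • z) ≤ R`. Hence `f • d₂` lies in the closed `R`-neighbourhood `K`
of `D` and in `f • K`. As `X` is proper, `K` is compact, so only finitely many such `f` occur,
and `g = h₁ * f * h₂⁻¹` lies in `H f H`. The double coset of `g` equals that of `f`, which gives
the finiteness of the set of double cosets. -/

/-- If a group `G` acts by isometries and metrically properly on a
proper metric space `X`, and `H ≤ G` preserves a nonempty closed subset `Y` and
acts cocompactly on it, then for every `R > 0` the elements `g ∈ G` moving some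
point of `Y` to within distance `R` of `Y` lie in finitely many double cosets
`H g H`; in particular the set of such double cosets is finite. -/
theorem finitely_many_close_double_cosets {X : Type*} [MetricSpace X] [ProperSpace X]
    {G : Type*} [Group G] [MulAction G X]
    (hiso : ∀ g : G, Isometry (fun x : X => g • x))
    (hproper : ∀ K : Set X, IsCompact K →
      {g : G | ((fun x : X => g • x) '' K) ∩ K ≠ ∅}.Finite)
    (Y : Set X) (hYne : Y.Nonempty) (hYcl : IsClosed Y)
    (H : Subgroup G) (hHY : ∀ h ∈ H, (fun x : X => h • x) '' Y = Y)
    (D : Set X) (hD : IsCompact D) (hDY : D ⊆ Y)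
    (hcocompact : (⋃ h ∈ H, (fun x : X => h • x) '' D) = Y) :
    ∀ R : ℝ, 0 < R →
      (∃ F : Set G, F.Finite ∧
        ∀ g : G, (∃ y ∈ Y, ∃ z ∈ Y, dist y (g • z) ≤ R) →
          g ∈ {w : G | ∃ h₁ ∈ H, ∃ f ∈ F, ∃ h₂ ∈ H, w = h₁ * f * h₂}) ∧
      {C : Set G | ∃ g : G, (∃ y ∈ Y, ∃ z ∈ Y, dist y (g • z) ≤ R) ∧
        C = {w : G | ∃ h₁ ∈ H, ∃ h₂ ∈ H, w = h₁ * g * h₂}}.Finite := by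
  intro R _
  set K := Metric.cthickening R D with hK
  have hKc : IsCompact K := hD.cthickening
  set F : Set G := {g : G | ((fun x : X => g • x) '' K) ∩ K ≠ ∅} with hF
  have hFfin : F.Finite := hproper K hKc
  have key : ∀ g : G, (∃ y ∈ Y, ∃ z ∈ Y, dist y (g • z) ≤ R) →
      ∃ h₁ ∈ H, ∃ f ∈ F, ∃ h₂ ∈ H, g = h₁ * f * h₂ := by
    rintro g ⟨y, hy, z, hz, hdist⟩
    rw [← hcocompact] at hy hz
    simp only [Set.mem_iUnion, Set.mem_image, exists_prop] at hy hz
    obtain ⟨h₁, hh₁, d₁, hd₁, rfl⟩ := hy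
    obtain ⟨h₂, hh₂, d₂, hd₂, rfl⟩ := hz
    refine ⟨h₁, hh₁, h₁⁻¹ * g * h₂, ?_, h₂⁻¹, H.inv_mem hh₂, by group⟩
    have hd : dist ((h₁⁻¹ * g * h₂) • d₂) d₁ ≤ R := by
      rw [dist_comm, ← (hiso h₁).dist_eq]
      simpa [mul_smul] using hdist
    have hd₂K : d₂ ∈ K := Metric.self_subset_cthickening D hd₂
    exact Set.nonempty_iff_ne_empty.mp
      ⟨_, Set.mem_image_of_mem _ hd₂K, Metric.mem_cthickening_of_dist_le _ d₁ R D hd₁ hd⟩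
  refine ⟨⟨F, hFfin, key⟩, ?_⟩
  refine (hFfin.image fun f => {w : G | ∃ h₁ ∈ H, ∃ h₂ ∈ H, w = h₁ * f * h₂}).subset ?_
  rintro C ⟨g, hg, rfl⟩
  obtain ⟨a, ha, f, hf, b, hb, rfl⟩ := key g hg
  refine ⟨f, hf, ?_⟩
  ext w
  constructor
  · rintro ⟨h₁, hh₁, h₂, hh₂, rfl⟩
    exact ⟨h₁ * a⁻¹, H.mul_mem hh₁ (H.inv_mem ha), b⁻¹ * h₂, H.mul_mem (H.inv_mem hb) hh₂,
      by group⟩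
  · rintro ⟨h₁, hh₁, h₂, hh₂, rfl⟩
    exact ⟨h₁ * a, H.mul_mem hh₁ ha, b * h₂, H.mul_mem hb hh₂, by group⟩
end

section
/- Let G be a residually finite group and let ρ : G → G be a group homomorphism with ρ ∘ ρ = ρ. Then the image subgroup H = ρ(G) is separable in G. -/
/-- A subset `S` of a group `G` is separable if every element outside `S`
can be separated from `S` by a homomorphism to a finite group. -/
def SeparableIn (G : Type*) [Group G] (S : Set G) : Prop :=
  ∀ a ∉ S, ∃ (Q : Type) (_ : Group Q) (_ : Finite Q) (φ : G →* Q), φ a ∉ φ '' S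

/-- A group is residually finite if every nontrivial element survives in
some finite quotient. -/
def ResiduallyFiniteGroup (G : Type*) [Group G] : Prop :=
  ∀ g : G, g ≠ 1 → ∃ (Q : Type) (_ : Group Q) (_ : Finite Q) (φ : G →* Q), φ g ≠ 1

/-- If `G` is residually finite and `ρ : G → G` is an idempotent
homomorphism (a retraction), then the image `H = ρ(G)` is separable in `G`. -/
theorem retract_image_separable {G : Type*} [Group G]
    (hrf : ResiduallyFiniteGroup G)
    (ρ : G →* G) (hρ : ∀ g : G, ρ (ρ g) = ρ g) :
    SeparableIn G (ρ.range : Set G) := by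
  intro a ha
  have hne : a⁻¹ * ρ a ≠ 1 := fun h => ha ⟨a, (inv_mul_eq_one.mp h).symm⟩
  obtain ⟨Q, _, _, φ, hφ⟩ := hrf _ hne
  -- `(φ, φ ∘ ρ)` sends the image of `ρ` into the diagonal of `Q × Q`, but not `a`.
  refine ⟨Q × Q, inferInstance, inferInstance, φ.prod (φ.comp ρ), ?_⟩
  rintro ⟨_, ⟨g, rfl⟩, h⟩
  obtain ⟨h₁, h₂⟩ := Prod.ext_iff.mp h
  simp only [MonoidHom.prod_apply, MonoidHom.comp_apply, hρ] at h₁ h₂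
  exact hφ (by rw [map_mul, map_inv, ← h₁, ← h₂, inv_mul_cancel])
end

section
/- Let G be a residually finite group, let ρ : G → G be a group homomorphism with ρ ∘ ρ = ρ, and let H = ρ(G). If K ≤ G is a subgroup that is separable in G and satisfies ρ(K) ⊆ K, then the double coset HK = {h·k : h ∈ H, k ∈ K} is separable in G. -/
/-- If `G` is residually finite, `ρ : G → G` is an idempotent
homomorphism with image `H = ρ(G)`, and `K ≤ G` is a separable subgroup with
`ρ(K) ⊆ K`, then the double coset `HK` is separable in `G`. -/
theorem retract_double_coset_separable {G : Type*} [Group G]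
    (hrf : ResiduallyFiniteGroup G)
    (ρ : G →* G) (hρ : ∀ g : G, ρ (ρ g) = ρ g)
    (K : Subgroup G) (hKsep : SeparableIn G (K : Set G))
    (hKρ : ∀ k ∈ K, ρ k ∈ K) :
    SeparableIn G {x : G | ∃ h ∈ ρ.range, ∃ k ∈ K, x = h * k} := by
  intro a ha
  have haK : (ρ a)⁻¹ * a ∉ (K : Set G) := fun h =>
    ha ⟨ρ a, ⟨a, rfl⟩, (ρ a)⁻¹ * a, h, by group⟩
  obtain ⟨Q, _, _, φ, hφ⟩ := hKsep _ haK
  refine ⟨Q × Q, inferInstance, inferInstance, φ.prod (φ.comp ρ), ?_⟩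
  rintro ⟨_, ⟨_, ⟨g, rfl⟩, k, hk, rfl⟩, h⟩
  simp only [MonoidHom.prod_apply, MonoidHom.comp_apply, map_mul, hρ, Prod.mk_mul_mk,
    Prod.mk.injEq] at h
  refine hφ ⟨(ρ k)⁻¹ * k, K.mul_mem (K.inv_mem (hKρ k hk)) hk, ?_⟩
  rw [map_mul, map_mul, map_inv, map_inv, ← h.1, ← h.2]
  group
end

section
/- Let G be a group, let n be a natural number, and for each i = 1, …, n let E_i ≤ V_i ≤ G be subgroups with E_i of finite index in V_i. Assume that for each i and each a ∈ V_i \ E_i there exists a subgroup U ≤ G of finite index in G with E_i ≤ U and a ∉ U. Then there exists a normal subgroup N ⊴ G of finite index such that E_i ∩ N = V_i ∩ N for all i = 1, …, n. -/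
/-!
For a single pair `E ≤ V`, choose representatives of the finitely many left cosets of `E` in `V`
and intersect finite-index subgroups of `G`, one for each representative, that contain `E` and
exclude the representative if it lies outside `E`. The intersection `W` has finite index and
contains `E`, so membership in `W` depends only on the left coset of `E`; hence `V ⊓ W ≤ E`.
The normal core of the intersection of the groups `W` belonging to the different pairs is then a
finite-index normal subgroup `N` with `V ⊓ N ≤ E` for every pair.
-/

/-- If every element of `V` outside `E` can be separated from `E` by a finite-index subgroup of
`G`, then finite index of `E` in `V` lets a single finite-index subgroup separate them all. -/
lemma exists_finiteIndex_inf_le {G : Type*} [Group G] (E V : Subgroup G)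
    (hfi : (E.subgroupOf V).FiniteIndex)
    (hsep : ∀ a ∈ V, a ∉ E → ∃ U : Subgroup G, U.FiniteIndex ∧ E ≤ U ∧ a ∉ U) :
    ∃ W : Subgroup G, W.FiniteIndex ∧ V ⊓ W ≤ E := by
  have hex : ∀ q : V ⧸ E.subgroupOf V, ∃ U : Subgroup G,
      U.FiniteIndex ∧ E ≤ U ∧ ((q.out : G) ∈ U → (q.out : G) ∈ E) := by
    intro q
    by_cases h : (q.out : G) ∈ E
    · exact ⟨⊤, inferInstance, le_top, fun _ => h⟩
    · obtain ⟨U, hU, hEU, hq⟩ := hsep _ q.out.2 h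
      exact ⟨U, hU, hEU, fun h' => absurd h' hq⟩
  choose U hU hEU hout using hex
  refine ⟨⨅ q, U q, Subgroup.finiteIndex_iInf hU, ?_⟩
  rintro x ⟨hxV, hxW⟩
  obtain ⟨e, he⟩ := QuotientGroup.mk_out_eq_mul (E.subgroupOf V) ⟨x, hxV⟩
  have heE : ((e : V) : G) ∈ E := Subgroup.mem_subgroupOf.mp e.2
  have hxe := hout (QuotientGroup.mk ⟨x, hxV⟩)
  rw [he] at hxe
  exact (E.mul_mem_cancel_right heE).mp
    (hxe (mul_mem (Subgroup.mem_iInf.mp hxW _) (hEU _ heE)))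

/-- Given finitely many pairs of subgroups `E i ≤ V i ≤ G` with
`E i` of finite index in `V i`, such that every `a ∈ V i \ E i` can be excluded
from a finite-index subgroup of `G` containing `E i`, there is a single
finite-index normal subgroup `N ⊴ G` with `E i ⊓ N = V i ⊓ N` for all `i`. -/
theorem exists_uniform_finite_index_normal_subgroup {G : Type*} [Group G]
    (n : ℕ) (E V : Fin n → Subgroup G)
    (hEV : ∀ i, E i ≤ V i)
    (hfi : ∀ i, ((E i).subgroupOf (V i)).FiniteIndex)
    (hsep : ∀ i, ∀ a ∈ V i, a ∉ E i →
      ∃ U : Subgroup G, U.FiniteIndex ∧ E i ≤ U ∧ a ∉ U) :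
    ∃ N : Subgroup G, N.Normal ∧ N.FiniteIndex ∧ ∀ i, E i ⊓ N = V i ⊓ N := by
  choose W hW hVW using fun i => exists_finiteIndex_inf_le (E i) (V i) (hfi i) (hsep i)
  have := Subgroup.finiteIndex_iInf hW
  refine ⟨(⨅ i, W i).normalCore, inferInstance, inferInstance, fun i => ?_⟩
  refine le_antisymm (inf_le_inf_right _ (hEV i)) (le_inf ?_ inf_le_right)
  exact (inf_le_inf_left _ ((Subgroup.normalCore_le _).trans (iInf_le W i))).trans (hVW i)
end

section
/- Let G be a group, let H ≤ G be a subgroup, and for each i = 1, …, n let K_i ≤ P_i ≤ G be subgroups such that K_i has finite index in P_i and K_i is separable in G. Then there exists a normal subgroup N ⊴ H of finite index in H such that N ∩ P_i ≤ K_i for all i = 1, …, n. -/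
/-- The kernel of a finite quotient separating `a` from `K` does not meet the coset `a K`. The
condition `a ∉ K` sits in the conclusion, so that a subgroup `M` can be chosen for every `a`. -/
theorem SeparableIn.exists_normal_disjoint_coset {G : Type*} [Group G] {K : Subgroup G}
    (hsep : SeparableIn G (K : Set G)) (a : G) :
    ∃ M : Subgroup G, M.Normal ∧ M.FiniteIndex ∧ (a ∉ K → ∀ k ∈ K, a * k ∉ M) := by
  by_cases ha : a ∈ K
  · exact ⟨⊤, inferInstance, inferInstance, fun h => absurd ha h⟩
  obtain ⟨Q, _, _, φ, hφ⟩ := hsep a ha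
  refine ⟨φ.ker, inferInstance, inferInstance, fun _ k hk hak => hφ ⟨k⁻¹, K.inv_mem hk, ?_⟩⟩
  rw [MonoidHom.mem_ker, map_mul] at hak
  rw [map_inv, eq_comm, eq_inv_iff_mul_eq_one, hak]

/-- The case of a single pair `(K, P)`, with `H = G`. -/
theorem SeparableIn.exists_normal_inf_le {G : Type*} [Group G] {K P : Subgroup G}
    (hfi : (K.subgroupOf P).FiniteIndex) (hsep : SeparableIn G (K : Set G)) :
    ∃ M : Subgroup G, M.Normal ∧ M.FiniteIndex ∧ M ⊓ P ≤ K := by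
  choose M hnormal hindex hM using hsep.exists_normal_disjoint_coset
  have : Finite (P ⧸ K.subgroupOf P) := inferInstance
  refine ⟨⨅ q : P ⧸ K.subgroupOf P, M (q.out : P),
    Subgroup.normal_iInf_normal fun q => hnormal _,
    Subgroup.finiteIndex_iInf fun q => hindex _, ?_⟩
  rintro x ⟨hxM, hxP⟩
  by_contra hxK
  set a : P := (QuotientGroup.mk ⟨x, hxP⟩ : P ⧸ K.subgroupOf P).out
  have hk : (a : G)⁻¹ * x ∈ K := by
    have h : (QuotientGroup.mk a : P ⧸ K.subgroupOf P) = QuotientGroup.mk ⟨x, hxP⟩ :=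
      QuotientGroup.out_eq' _
    simpa [Subgroup.mem_subgroupOf] using QuotientGroup.eq.mp h
  have haK : (a : G) ∉ K := fun h => hxK (by simpa using K.mul_mem h hk)
  refine hM a haK _ hk ?_
  rw [mul_inv_cancel_left]
  exact Subgroup.mem_iInf.mp hxM _

/-- If `K i ≤ P i ≤ G` with each `K i` of finite index in `P i`
and separable in `G`, then for any subgroup `H ≤ G` there is a finite-index
normal subgroup `N` of `H` with `N ∩ P i ≤ K i` for all `i`. -/
theorem exists_finite_index_normal_inter_le {G : Type*} [Group G]
    (H : Subgroup G) (n : ℕ) (K P : Fin n → Subgroup G)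
    (hKP : ∀ i, K i ≤ P i)
    (hfi : ∀ i, ((K i).subgroupOf (P i)).FiniteIndex)
    (hsep : ∀ i, SeparableIn G (K i : Set G)) :
    ∃ N : Subgroup G, N ≤ H ∧
      (∀ h ∈ H, ∀ x ∈ N, h * x * h⁻¹ ∈ N) ∧
      (N.subgroupOf H).FiniteIndex ∧
      ∀ i, N ⊓ P i ≤ K i := by
  choose M hnormal hindex hM using fun i => (hsep i).exists_normal_inf_le (hfi i)
  have hN : (⨅ i, M i).Normal := Subgroup.normal_iInf_normal hnormal
  have hNindex : (⨅ i, M i).FiniteIndex := Subgroup.finiteIndex_iInf hindex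
  refine ⟨(⨅ i, M i) ⊓ H, inf_le_right, fun h hh x hx => ⟨hN.conj_mem x hx.1 h,
    H.mul_mem (H.mul_mem hh hx.2) (H.inv_mem hh)⟩, ?_, fun i => ?_⟩
  · rw [Subgroup.inf_subgroupOf_right]
    infer_instance
  · exact (inf_le_inf_right _ (inf_le_left.trans (iInf_le M i))).trans (hM i)
end

section
/- Let G be a group and let G' ≤ G be a subgroup of finite index. Let A, B ≤ G be subgroups, and let A' ≤ A and B' ≤ B be subgroups of finite index in A and B respectively, with A' ≤ G' and B' ≤ G'. If the product set A'B' = {a·b : a ∈ A', b ∈ B'} is separable in G', then the product set AB = {a·b : a ∈ A, b ∈ B} is separable in G. -/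
theorem separableIn_iff_exists_normal {G : Type*} [Group G] {S : Set G} :
    SeparableIn G S ↔
      ∀ a ∉ S, ∃ N : Subgroup G, N.Normal ∧ N.FiniteIndex ∧ ∀ k ∈ N, a * k ∉ S := by
  constructor
  · intro h a ha
    obtain ⟨Q, _, _, φ, hφ⟩ := h a ha
    refine ⟨φ.ker, inferInstance, inferInstance, fun k hk hS => hφ ⟨_, hS, ?_⟩⟩
    rw [map_mul, φ.mem_ker.1 hk, mul_one]
  · intro h a ha
    obtain ⟨N, hN, hfi, hk⟩ := h a ha
    -- `Shrink` brings the finite quotient `G ⧸ N` down to `Type`, where the definition wants it.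
    let e : Shrink.{0} (G ⧸ N) ≃* G ⧸ N := Shrink.mulEquiv
    refine ⟨Shrink.{0} (G ⧸ N), inferInstance, inferInstance,
      e.symm.toMonoidHom.comp (QuotientGroup.mk' N), ?_⟩
    rintro ⟨s, hs, hsa⟩
    have hsa' : (s : G ⧸ N) = a := e.symm.injective hsa
    refine hk (a⁻¹ * s) (QuotientGroup.eq.1 hsa'.symm) ?_
    rwa [mul_inv_cancel_left]

theorem SeparableIn.of_subgroup {G : Type*} [Group G] {H : Subgroup G} (hH : H.FiniteIndex)
    {S : Set H} (hS : SeparableIn H S) : SeparableIn G (Subtype.val '' S) := by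
  rw [separableIn_iff_exists_normal] at hS ⊢
  intro a ha
  by_cases haH : a ∈ H
  · obtain ⟨N, -, hfi, hN⟩ := hS ⟨a, haH⟩ fun h => ha ⟨_, h, rfl⟩
    have hfi' : (N.map H.subtype).FiniteIndex := by
      refine ⟨?_⟩
      rw [Subgroup.index_map_subtype]
      exact mul_ne_zero hfi.index_ne_zero hH.index_ne_zero
    refine ⟨(N.map H.subtype).normalCore, inferInstance, inferInstance, ?_⟩
    rintro k hk ⟨s, hs, hsa⟩
    obtain ⟨n, hn, rfl⟩ := Subgroup.normalCore_le _ hk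
    have hsn : s = ⟨a, haH⟩ * n := Subtype.ext hsa
    exact hN n hn (hsn ▸ hs)
  · refine ⟨H.normalCore, inferInstance, inferInstance, ?_⟩
    rintro k hk ⟨s, -, hsa⟩
    refine haH ((H.mul_mem_cancel_right (H.normalCore_le hk)).1 ?_)
    exact hsa ▸ s.2

theorem SeparableIn.translate {G : Type*} [Group G] {S : Set G} (hS : SeparableIn G S) (g h : G) :
    SeparableIn G {x | g * x * h ∈ S} := by
  intro a ha
  obtain ⟨Q, _, _, φ, hφ⟩ := hS (g * a * h) ha
  refine ⟨Q, inferInstance, inferInstance, φ, ?_⟩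
  rintro ⟨s, hs, hsa⟩
  exact hφ ⟨_, hs, by simp only [map_mul, hsa]⟩

theorem SeparableIn.iUnion {G ι : Type*} [Group G] [Finite ι] {S : ι → Set G}
    (hS : ∀ i, SeparableIn G (S i)) : SeparableIn G (⋃ i, S i) := by
  simp only [separableIn_iff_exists_normal] at hS ⊢
  intro a ha
  choose N hN hfi hk using fun i => hS i a fun h => ha (Set.mem_iUnion_of_mem i h)
  refine ⟨⨅ i, N i, Subgroup.normal_iInf_normal hN, Subgroup.finiteIndex_iInf hfi, ?_⟩
  intro k hkN hmem
  obtain ⟨i, hi⟩ := Set.mem_iUnion.1 hmem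
  exact hk i k (Subgroup.mem_iInf.1 hkN i) hi

/-- If `G' ≤ G` has finite index, `A' ≤ A` and `B' ≤ B` have finite
index with `A', B' ≤ G'`, and the product set `A'B'` is separable in `G'`, then
the product set `AB` is separable in `G`. -/
theorem double_coset_separable_of_finite_index {G : Type*} [Group G]
    (G' : Subgroup G) (hG' : G'.FiniteIndex)
    (A B A' B' : Subgroup G)
    (hA' : A' ≤ A) (hB' : B' ≤ B)
    (hA'fi : (A'.subgroupOf A).FiniteIndex) (hB'fi : (B'.subgroupOf B).FiniteIndex)
    (hA'G : A' ≤ G') (hB'G : B' ≤ G')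
    (hsep : SeparableIn G' {x : G' | ∃ a ∈ A', ∃ b ∈ B', (x : G) = a * b}) :
    SeparableIn G {x : G | ∃ a ∈ A, ∃ b ∈ B, x = a * b} := by
  have hunion := SeparableIn.iUnion
    fun p : (A ⧸ A'.subgroupOf A) × (B ⧸ B'.subgroupOf B) =>
      (hsep.of_subgroup hG').translate (p.1.out : G)⁻¹ (p.2.out : G)
  convert hunion using 1
  ext x
  simp only [Set.mem_iUnion, Set.mem_ofPred_eq, Set.mem_image]
  constructor
  · rintro ⟨a, ha, b, hb, rfl⟩
    -- The left coset of `b⁻¹` gives the right coset of `b`.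
    let c : A ⧸ A'.subgroupOf A := ((⟨a, ha⟩ : A) : A ⧸ A'.subgroupOf A)
    let d : B ⧸ B'.subgroupOf B := ((⟨b, hb⟩ : B)⁻¹ : B)
    have hc : (c.out : G)⁻¹ * a ∈ A' :=
      Subgroup.mem_subgroupOf.1 (QuotientGroup.eq.1 (QuotientGroup.out_eq' c))
    have hd : b * (d.out : G) ∈ B' := by
      have h : ((⟨b, hb⟩ : B)⁻¹)⁻¹ * d.out ∈ B'.subgroupOf B :=
        QuotientGroup.eq.1 (QuotientGroup.out_eq' d).symm
      rw [inv_inv] at h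
      exact Subgroup.mem_subgroupOf.1 h
    have heq : (c.out : G)⁻¹ * (a * b) * d.out = ((c.out : G)⁻¹ * a) * (b * d.out) := by group
    exact ⟨(c, d), ⟨_, heq ▸ G'.mul_mem (hA'G hc) (hB'G hd)⟩, ⟨_, hc, _, hd, heq⟩, rfl⟩
  · rintro ⟨⟨c, d⟩, y, ⟨a, ha, b, hb, hy⟩, hyx⟩
    refine ⟨c.out * a, A.mul_mem c.out.2 (hA' ha), b * (d.out : G)⁻¹,
      B.mul_mem (hB' hb) (B.inv_mem d.out.2), ?_⟩
    rw [hy] at hyx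
    calc x = c.out * ((c.out : G)⁻¹ * x * d.out) * (d.out : G)⁻¹ := by group
      _ = c.out * a * (b * (d.out : G)⁻¹) := by rw [← hyx]; group
end
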